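/- Let G and H be finitely generated groups with G ≈ₜ H. Suppose N is a normal subgroup of G such that the quotient G/N is finitely presented and G has a golden configuration pair with respect to N. Then there exists a normal subgroup 𝔑 of H such that G/N is isomorphic to H/𝔑. -/

import Mathlib

/-!
Write `Q = G ⧸ N`, and let `g₁, …, gₙ` be the generators in the golden pair.  Since `Q` is finitely
presented, finitely many relators in the images of the `gᵢ` suffice to define it
(`exists_finite_relators`).  Refine the golden partition of `Q` so that every element of a finite
set `B` lies alone in its cell, where `B` consists of `1`, the `gᵢ⁻¹` and the values of all
suffixes of those relators.  By `G ≈ₜ H` the refined pair has the configuration set of some pair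
of `H`, with generators `h₁, …, hₙ`; let `P w ⊆ H` be the set corresponding to the cell `{w}`,
`w ∈ B`, and put `M = P 1`.

A configuration determines how left and right multiplication by generators moves the singleton
cells, so `hᵢ x ∈ P (gᵢ w) ↔ x ∈ P w` and `x hᵢ ∈ P (w gᵢ) ↔ x ∈ P w` whenever both cells are
singletons (`cell_left`, `cell_right`).  Hence

* `hᵢ M = M hᵢ`, so `M` is a normal subset and the left stabilizer `𝔑` of `M` is a normal subgroup;
* reading a relator letter by letter, its value in `H` maps `M` onto itself, i.e. lies in `𝔑`
  (`cell_word`).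

So `gᵢ ↦ hᵢ` induces a surjection `Q → H ⧸ 𝔑`.  It is injective: an element outside `N` is given by
a word whose value in `H` moves `M` off itself, by goldenness, and `M` is nonempty.  Goldenness is
inherited by the coarsening of the partition of `H`; as it speaks only about groups of a fixed
universe, it is applied to a copy of the countable group `H` there (`golden_transfer`).
-/

open scoped Pointwise

universe u v

/-- `g` is an (ordered, finite) generating tuple of the group `G`. -/
def IsGenerating {G : Type*} [Group G] {n : ℕ} (g : Fin n → G) : Prop :=
  Subgroup.closure (Set.range g) = ⊤

/-- `E` is an (ordered, finite) partition of the underlying set of `G`: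
every element lies in exactly one cell. -/
def IsPartition {G : Type*} {m : ℕ} (E : Fin m → Set G) : Prop :=
  ∀ x : G, ∃! i : Fin m, x ∈ E i

/-- The type in which two-sided configurations corresponding to a generating tuple of
length `n` and a partition of length `m` live: a tuple `(c₀, (c₁,…,cₙ), (c_{n+1},…,c_{2n}))`. -/
abbrev TwoSidedConfig (n m : ℕ) := Fin m × (Fin n → Fin m) × (Fin n → Fin m)

/-- The two-sided configuration set `Con_t(𝔤, ℰ)`. -/
def TwoSidedConfigSet {G : Type*} [Group G] {n m : ℕ} (g : Fin n → G) (E : Fin m → Set G) :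
    Set (TwoSidedConfig n m) :=
  {c | ∃ x ∈ E c.1, ∀ i : Fin n, g i * x ∈ E (c.2.1 i) ∧ x * g i ∈ E (c.2.2 i)}

/-- `Con_t(G)`: the collection of all two-sided configuration sets of `G`,
over all configuration pairs `(𝔤, ℰ)`. -/
def TwoSidedConfigSets (G : Type*) [Group G] : Set (Σ n m : ℕ, Set (TwoSidedConfig n m)) :=
  {S | ∃ g : Fin S.1 → G, ∃ E : Fin S.2.1 → Set G,
    IsGenerating g ∧ IsPartition E ∧ S.2.2 = TwoSidedConfigSet g E}

/-- Two-sided configuration equivalence `G ≈ₜ H`. -/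
def ConfigEqT (G : Type*) (H : Type*) [Group G] [Group H] : Prop :=
  TwoSidedConfigSets G = TwoSidedConfigSets H

/-- The (one-sided) configuration set `Con(𝔤, ℰ)`. -/
def ConfigSet {G : Type*} [Group G] {n m : ℕ} (g : Fin n → G) (E : Fin m → Set G) :
    Set (Fin m × (Fin n → Fin m)) :=
  {c | ∃ x ∈ E c.1, ∀ k : Fin n, g k * x ∈ E (c.2 k)}

/-- `Con(G)`: the collection of all configuration sets of `G`. -/
def ConfigSets (G : Type*) [Group G] : Set (Σ n m : ℕ, Set (Fin m × (Fin n → Fin m))) :=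
  {S | ∃ g : Fin S.1 → G, ∃ E : Fin S.2.1 → Set G,
    IsGenerating g ∧ IsPartition E ∧ S.2.2 = ConfigSet g E}

/-- Configuration equivalence `G ≈ H`. -/
def ConfigEq (G : Type*) (H : Type*) [Group G] [Group H] : Prop :=
  ConfigSets G = ConfigSets H

/-- The word `W(J, ρ; 𝔤) = ∏_{i=1}^{p} g_{J(i)}^{ρ(i)}` associated to a representative
pair `(J, ρ)` (here `ρ i = true` encodes exponent `1`, and `ρ i = false` exponent `-1`). -/
def word {G : Type*} [Group G] {n p : ℕ} (g : Fin n → G) (J : Fin p → Fin n)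
    (ρ : Fin p → Bool) : G :=
  ((List.finRange p).map (fun i => if ρ i then g (J i) else (g (J i))⁻¹)).prod

/-- The configuration pair `(𝔤, q⁻¹(ℰ))` is golden w.r.t. the normal subgroup `N`,
where `ℰ` is a partition of `G ⧸ N` containing the singleton `{1}`. -/
def IsGoldenConfigPair {G : Type u} [Group G] (N : Subgroup G) [N.Normal] {n m : ℕ}
    (g : Fin n → G) (E : Fin m → Set (G ⧸ N)) : Prop :=
  IsGenerating g ∧ IsPartition E ∧
  ∃ i₀ : Fin m, E i₀ = ({1} : Set (G ⧸ N)) ∧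
  ∃ (p : G → ℕ) (J : ∀ x : G, Fin (p x) → Fin n) (ρ : ∀ x : G, Fin (p x) → Bool),
    (∀ x : G, x ∉ N →
      QuotientGroup.mk' N x = word (fun i => QuotientGroup.mk' N (g i)) (J x) (ρ x)) ∧
    (∀ (H : Type v) [Group H] (h : Fin n → H) (F : Fin m → Set H),
      IsGenerating h → IsPartition F →
      TwoSidedConfigSet g (fun i => QuotientGroup.mk' N ⁻¹' E i) = TwoSidedConfigSet h F →
      ∀ x : G, x ∉ N → word h (J x) (ρ x) • F i₀ ∩ F i₀ = ∅)

/-- `G` has a golden configuration pair w.r.t. the normal subgroup `N`. -/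
def HasGoldenConfigPairWrt (G : Type u) [Group G] (N : Subgroup G) [N.Normal] : Prop :=
  ∃ (n m : ℕ) (g : Fin n → G) (E : Fin m → Set (G ⧸ N)), IsGoldenConfigPair.{u, v} N g E

/-- `G` has a golden configuration pair (i.e. one w.r.t. the trivial subgroup). -/
def HasGoldenConfigPair (G : Type u) [Group G] : Prop :=
  HasGoldenConfigPairWrt.{u, v} G ⊥

/-- `(𝔤, ς, {(J_g, ρ_g)})` is a golden system w.r.t. the normal subgroup `N`.  The
finite-range function `ς` on `G ⧸ N` is encoded as a surjection onto `Fin m`; the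
`ς`-partition of `G` is then `v ↦ (ς ∘ q)⁻¹(v)`, `v : Fin m`. -/
def IsGoldenSystem {G : Type u} [Group G] (N : Subgroup G) [N.Normal] {n m : ℕ}
    (g : Fin n → G) (ς : G ⧸ N → Fin m)
    {p : G → ℕ} (J : ∀ x : G, Fin (p x) → Fin n) (ρ : ∀ x : G, Fin (p x) → Bool) : Prop :=
  IsGenerating g ∧ Function.Surjective ς ∧
  (∀ x : G, x ∉ N →
    QuotientGroup.mk' N x = word (fun i => QuotientGroup.mk' N (g i)) (J x) (ρ x)) ∧
  ((fun x : G => ς (QuotientGroup.mk' N x)) ⁻¹' {ς (1 : G ⧸ N)} = (N : Set G)) ∧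
  (∀ (H : Type v) [Group H] (h : Fin n → H) (F : Fin m → Set H),
    IsGenerating h → IsPartition F →
    TwoSidedConfigSet g (fun v => (fun x : G => ς (QuotientGroup.mk' N x)) ⁻¹' {v})
      = TwoSidedConfigSet h F →
    ∀ x : G, x ∉ N →
      word h (J x) (ρ x) • F (ς (1 : G ⧸ N)) ⊆ F (ς (QuotientGroup.mk' N x)))

/-- `G` admits a golden system w.r.t. the normal subgroup `N`. -/
def HasGoldenSystemWrt (G : Type u) [Group G] (N : Subgroup G) [N.Normal] : Prop :=
  ∃ (n m : ℕ) (g : Fin n → G) (ς : G ⧸ N → Fin m) (p : G → ℕ)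
    (J : ∀ x : G, Fin (p x) → Fin n) (ρ : ∀ x : G, Fin (p x) → Bool),
    IsGoldenSystem.{u, v} N g ς J ρ

/-- `G` admits a golden system (i.e. one w.r.t. the trivial subgroup). -/
def HasGoldenSystem (G : Type u) [Group G] : Prop :=
  HasGoldenSystemWrt.{u, v} G ⊥

/-- A group is Hopfian if every surjective endomorphism is an automorphism. -/
def IsHopfianGroup (G : Type*) [Group G] : Prop :=
  ∀ f : G →* G, Function.Surjective f → Function.Bijective f

/-- A group is finitely presented if it is presented by finitely many generators
and finitely many relators. -/
def IsFinitelyPresentedGroup (G : Type*) [Group G] : Prop :=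
  ∃ (n : ℕ) (rels : Set (FreeGroup (Fin n))),
    rels.Finite ∧ Nonempty (PresentedGroup rels ≃* G)

/-- A group is polycyclic if it has a subnormal series with cyclic factors. -/
def IsPolycyclic (G : Type*) [Group G] : Prop :=
  ∃ (k : ℕ) (c : Fin (k + 1) → Subgroup G),
    c 0 = ⊥ ∧ c (Fin.last k) = ⊤ ∧
    ∀ i : Fin k, c i.castSucc ≤ c i.succ ∧
      ∃ hn : ((c i.castSucc).subgroupOf (c i.succ)).Normal,
        letI := hn
        IsCyclic ((c i.succ) ⧸ (c i.castSucc).subgroupOf (c i.succ))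

/-- An FC-group: every conjugacy class is finite. -/
def IsFCGroup (G : Type*) [Group G] : Prop :=
  ∀ g : G, {h : G | IsConj g h}.Finite

/-- A normal subset: `hM = Mh` for all `h`. -/
def IsNormalSubset {H : Type*} [Group H] (M : Set H) : Prop :=
  ∀ h : H, (fun x => h * x) '' M = (fun x => x * h) '' M

/-- `E'` is a refinement of the partition `E`. -/
def IsRefinement {G : Type*} {r s : ℕ} (E' : Fin s → Set G) (E : Fin r → Set G) : Prop :=
  ∀ l : Fin s, ∃ k : Fin r, E' l ⊆ E k

/-- The pairs `(ℰ', ℰ)` and `(ℱ', ℱ)` are similar. -/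
def SimilarPairs {G H : Type*} {r s : ℕ} (E : Fin r → Set G) (E' : Fin s → Set G)
    (F : Fin r → Set H) (F' : Fin s → Set H) : Prop :=
  ∀ k : Fin r, {l : Fin s | (E k ∩ E' l).Nonempty} = {l : Fin s | (F k ∩ F' l).Nonempty}

universe w

/-! ### Words and finite presentations -/

lemma map_word {G H : Type*} [Group G] [Group H] (φ : G →* H) {n p : ℕ} (g : Fin n → G)
    (J : Fin p → Fin n) (ρ : Fin p → Bool) :
    φ (word g J ρ) = word (fun i => φ (g i)) J ρ := by
  unfold word
  rw [map_list_prod, List.map_map]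
  congr 2
  funext i
  simp only [Function.comp]
  split <;> simp

/-- A finitely presented group is defined by finitely many relators with respect to every finite
generating tuple: killing a suitable finite set of relators of `f` is enough for a homomorphism
from the free group to factor through `f`. -/
lemma exists_finite_relators {Q : Type*} [Group Q] (hQ : IsFinitelyPresentedGroup Q) {n : ℕ}
    (f : FreeGroup (Fin n) →* Q) (hf : Function.Surjective f) :
    ∃ S : Set (FreeGroup (Fin n)), S.Finite ∧ (∀ s ∈ S, f s = 1) ∧
      ∀ (K : Type w) [Group K] (φ : FreeGroup (Fin n) →* K), (∀ s ∈ S, φ s = 1) →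
        ∃ ψ : Q →* K, ∀ a, ψ (f a) = φ a := by
  obtain ⟨k, rels, hfin, ⟨e⟩⟩ := hQ
  -- `a` and `b` rewrite each of the two generating tuples in terms of the other
  choose a ha using fun j : Fin k => hf (e (PresentedGroup.of j))
  choose b hb using fun i : Fin n =>
    PresentedGroup.mk_surjective rels (e.symm (f (FreeGroup.of i)))
  have hfa : f.comp (FreeGroup.lift a) = e.toMonoidHom.comp (PresentedGroup.mk rels) := by
    ext j
    rw [MonoidHom.comp_apply, FreeGroup.lift_apply_of, ha]
    rfl
  have hfa' : ∀ y, f (FreeGroup.lift a y) = e (PresentedGroup.mk rels y) :=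
    fun y => DFunLike.congr_fun hfa y
  refine ⟨(FreeGroup.lift a '' rels) ∪
    Set.range (fun i => (FreeGroup.of i)⁻¹ * FreeGroup.lift a (b i)),
    (hfin.image _).union (Set.finite_range _), ?_, ?_⟩
  · rintro _ (⟨r, hr, rfl⟩ | ⟨i, rfl⟩)
    · rw [hfa', PresentedGroup.one_of_mem hr, map_one]
    · simp [hfa', hb]
  · intro K _ φ hφ
    have hr : ∀ r ∈ rels, FreeGroup.lift (fun j => φ (a j)) r = 1 := by
      intro r hr
      have h1 : FreeGroup.lift (fun j => φ (a j)) = φ.comp (FreeGroup.lift a) := by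
        ext j; simp
      rw [h1]
      exact hφ _ (Or.inl ⟨r, hr, rfl⟩)
    have hψ : ∀ y, PresentedGroup.toGroup hr (PresentedGroup.mk rels y)
        = φ (FreeGroup.lift a y) := by
      intro y
      have h2 : (PresentedGroup.toGroup hr).comp (PresentedGroup.mk rels)
          = φ.comp (FreeGroup.lift a) := by
        ext j
        rw [MonoidHom.comp_apply φ, FreeGroup.lift_apply_of]
        exact PresentedGroup.toGroup.of hr (x := j)
      exact DFunLike.congr_fun h2 y
    refine ⟨(PresentedGroup.toGroup hr).comp e.symm.toMonoidHom, fun x => ?_⟩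
    have h3 : ((PresentedGroup.toGroup hr).comp e.symm.toMonoidHom).comp f = φ := by
      ext i
      have h4 := hφ _ (Or.inr ⟨i, rfl⟩)
      rw [map_mul, map_inv, inv_mul_eq_one] at h4
      simp only [MonoidHom.comp_apply]
      change PresentedGroup.toGroup hr (e.symm (f (FreeGroup.of i))) = _
      rw [← hb, hψ, ← h4]
    exact DFunLike.congr_fun h3 x

/-! ### Singleton cells under multiplication -/

section Cells

/-- Every two-sided configuration of `(h, κ)` is one of `(g, e)`, where the partitions are given by
the functions `κ` and `e` that send an element to the label of its cell. -/
def ConfigLE {Q H α : Type*} [Group Q] [Group H] {n : ℕ} (g : Fin n → Q) (h : Fin n → H)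
    (e : Q → α) (κ : H → α) : Prop :=
  ∀ x, ∃ z, κ x = e z ∧ ∀ i, κ (h i * x) = e (g i * z) ∧ κ (x * h i) = e (z * g i)

variable {Q H α : Type*} [Group Q] [Group H] {n : ℕ} {g : Fin n → Q} {h : Fin n → H}
  {e : Q → α} {κ : H → α} {B : Set Q}

lemma cell_left (hB : ∀ w ∈ B, ∀ z, e z = e w → z = w) (hc : ConfigLE g h e κ)
    {w : Q} {i : Fin n} (hw : w ∈ B) (hw' : g i * w ∈ B) (x : H) :
    κ (h i * x) = e (g i * w) ↔ κ x = e w := by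
  obtain ⟨z, hz, hi⟩ := hc x
  rw [(hi i).1, hz]
  constructor
  · intro h1
    rw [mul_left_cancel (hB _ hw' _ h1)]
  · intro h1
    rw [hB _ hw _ h1]

lemma cell_right (hB : ∀ w ∈ B, ∀ z, e z = e w → z = w) (hc : ConfigLE g h e κ)
    {w : Q} {i : Fin n} (hw : w ∈ B) (hw' : w * g i ∈ B) (x : H) :
    κ (x * h i) = e (w * g i) ↔ κ x = e w := by
  obtain ⟨z, hz, hi⟩ := hc x
  rw [(hi i).2, hz]
  constructor
  · intro h1
    rw [mul_right_cancel (hB _ hw' _ h1)]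
  · intro h1
    rw [hB _ hw _ h1]

/-- If the values of all suffixes of a word lie alone in their cells, then the word in the `h i`
carries the set corresponding to `{1}` onto the set corresponding to its value in `Q`. -/
lemma cell_word (hB : ∀ w ∈ B, ∀ z, e z = e w → z = w) (hc : ConfigLE g h e κ)
    (t : List (Fin n × Bool))
    (ht : ∀ s, s <:+ t → FreeGroup.lift g (FreeGroup.mk s) ∈ B) (x : H) :
    κ (FreeGroup.lift h (FreeGroup.mk t) * x) = e (FreeGroup.lift g (FreeGroup.mk t))
      ↔ κ x = e 1 := by
  induction t with
  | nil => simp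
  | cons a t ih =>
    have ih' := ih (fun s hs => ht s (hs.trans (List.suffix_cons a t)))
    have hb := ht t (List.suffix_cons a t)
    have hb' := ht _ List.suffix_rfl
    obtain ⟨i, ε⟩ := a
    rw [← ih']
    cases ε
    · have hg : FreeGroup.lift g (FreeGroup.mk ((i, false) :: t))
          = (g i)⁻¹ * FreeGroup.lift g (FreeGroup.mk t) := by simp
      have hh : FreeGroup.lift h (FreeGroup.mk ((i, false) :: t))
          = (h i)⁻¹ * FreeGroup.lift h (FreeGroup.mk t) := by simp
      rw [hg] at hb' ⊢
      rw [hh]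
      rw [← cell_left hB hc (i := i) hb' (by simpa using hb)]
      simp [mul_assoc]
    · have hg : FreeGroup.lift g (FreeGroup.mk ((i, true) :: t))
          = g i * FreeGroup.lift g (FreeGroup.mk t) := by simp
      have hh : FreeGroup.lift h (FreeGroup.mk ((i, true) :: t))
          = h i * FreeGroup.lift h (FreeGroup.mk t) := by simp
      rw [hg] at hb' ⊢
      rw [hh, mul_assoc]
      exact cell_left hB hc hb hb' _

/-- If `1` and all `(g i)⁻¹` lie alone in their cells, then the set corresponding to `{1}` is a
normal subset. -/
lemma cell_normal (hB : ∀ w ∈ B, ∀ z, e z = e w → z = w) (hc : ConfigLE g h e κ)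
    (h1 : 1 ∈ B) (hi : ∀ i, (g i)⁻¹ ∈ B) (hgen : IsGenerating h) (k x : H) :
    κ (k * x) = e 1 ↔ κ (x * k) = e 1 := by
  have hk : k ∈ Subgroup.closure (Set.range h) := by rw [hgen]; trivial
  induction hk using Subgroup.closure_induction generalizing x with
  | mem k hk =>
    obtain ⟨i, rfl⟩ := hk
    have hl := cell_left hB hc (i := i) (hi i) (by simpa using h1) x
    have hr := cell_right hB hc (i := i) (hi i) (by simpa using h1) x
    rw [mul_inv_cancel] at hl
    rw [inv_mul_cancel] at hr
    exact hl.trans hr.symm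
  | one => simp
  | mul a b _ _ ha hb =>
    have h2 := ha (b * x)
    have h3 := hb (x * a)
    rw [mul_assoc] at h2 h3
    rw [mul_assoc]
    exact h2.trans h3
  | inv a _ ha =>
    have h2 := ha (a⁻¹ * x * a⁻¹)
    simp only [mul_assoc, inv_mul_cancel, mul_one, mul_inv_cancel_left] at h2
    exact h2.symm

end Cells

/-- The left stabilizer `{a | a M = M}` of a set `M`, given by its elements. -/
def leftStab {H : Type*} [Group H] (M : Set H) : Subgroup H where
  carrier := {a | ∀ x, a * x ∈ M ↔ x ∈ M}
  one_mem' := by simp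
  mul_mem' := by
    intro a b ha hb x
    rw [mul_assoc, ha, hb]
  inv_mem' := by
    intro a ha x
    rw [← ha, mul_inv_cancel_left]

lemma leftStab_normal {H : Type*} [Group H] (M : Set H)
    (hM : ∀ k x, k * x ∈ M ↔ x * k ∈ M) : (leftStab M).Normal where
  conj_mem := by
    intro a ha k x
    rw [mul_assoc, mul_assoc, hM, mul_assoc, ha, hM, mul_inv_cancel_left]

/-! ### Partitions, refinements and configuration sets -/

/-- The label of the cell of a partition that contains a given element. -/
noncomputable def cellOf {G : Type*} [Group G] {m : ℕ} {E : Fin m → Set G} (hE : IsPartition E)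
    (x : G) : Fin m := (hE x).choose

lemma mem_cell_iff {G : Type*} [Group G] {m : ℕ} {E : Fin m → Set G} (hE : IsPartition E)
    (x : G) (i : Fin m) : x ∈ E i ↔ cellOf hE x = i := by
  constructor
  · intro hx
    exact ((hE x).choose_spec.2 i hx).symm
  · rintro rfl
    exact (hE x).choose_spec.1

lemma isPartition_fibers {G : Type*} [Group G] {m : ℕ} (e : G → Fin m) :
    IsPartition (fun i => {x | e x = i}) := fun x => ⟨e x, rfl, fun _ h => h.symm⟩

lemma configLE_of_subset {G H : Type*} [Group G] [Group H] {n m : ℕ} {g : Fin n → G}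
    {h : Fin n → H} {e : G → Fin m} {κ : H → Fin m}
    (hs : TwoSidedConfigSet h (fun i => {x | κ x = i})
      ⊆ TwoSidedConfigSet g (fun i => {x | e x = i})) :
    ConfigLE g h e κ := by
  intro x
  obtain ⟨z, hz, hi⟩ := hs (show (κ x, (fun i => κ (h i * x)), (fun i => κ (x * h i))) ∈ _ from
    ⟨x, rfl, fun i => ⟨rfl, rfl⟩⟩)
  exact ⟨z, hz.symm, fun i => ⟨(hi i).1.symm, (hi i).2.symm⟩⟩

lemma subset_of_configLE {G H α : Type*} [Group G] [Group H] {n m : ℕ} {g : Fin n → G}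
    {h : Fin n → H} {e : G → α} {κ : H → α} (hc : ConfigLE g h e κ) (c : α → Fin m) :
    TwoSidedConfigSet h (fun i => {x | c (κ x) = i})
      ⊆ TwoSidedConfigSet g (fun i => {x | c (e x) = i}) := by
  rintro d ⟨x, hx, hi⟩
  obtain ⟨z, hz, hzi⟩ := hc x
  refine ⟨z, ?_, fun i => ⟨?_, ?_⟩⟩
  · rw [Set.mem_ofPred_eq, ← hz]; exact hx
  · rw [Set.mem_ofPred_eq, ← (hzi i).1]; exact (hi i).1
  · rw [Set.mem_ofPred_eq, ← (hzi i).2]; exact (hi i).2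

/-- The partition of `Q` given by `e₀` has a refinement, given by `e`, in which every element of the
finite set `B` lies alone in its cell. -/
lemma exists_refinement {Q : Type*} {m : ℕ} (e₀ : Q → Fin m) {B : Set Q} (hB : B.Finite) :
    ∃ (m' : ℕ) (e : Q → Fin m') (c : Fin m' → Fin m),
      (∀ z, c (e z) = e₀ z) ∧ ∀ w ∈ B, ∀ z, e z = e w → z = w := by
  classical
  have : Finite B := hB
  obtain ⟨m', ⟨σ⟩⟩ := Finite.exists_equiv_fin (Fin m × Option B)
  refine ⟨m', fun z => σ (e₀ z, if hz : z ∈ B then some ⟨z, hz⟩ else none),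
    fun i => (σ.symm i).1, fun z => by simp, ?_⟩
  intro w hw z hz
  have h1 := congrArg Prod.snd (σ.injective hz)
  by_cases hzB : z ∈ B
  · simpa [hzB, hw] using h1
  · simp [hzB, hw] at h1

lemma isGenerating_map {G H : Type*} [Group G] [Group H] (φ : G →* H)
    (hφ : Function.Surjective φ) {n : ℕ} {g : Fin n → G} (hg : IsGenerating g) :
    IsGenerating (fun i => φ (g i)) := by
  unfold IsGenerating at *
  have h1 : Set.range (fun i => φ (g i)) = φ '' Set.range g := by
    rw [← Set.range_comp]; rfl
  rw [h1, ← MonoidHom.map_closure, hg]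
  exact Subgroup.map_top_of_surjective φ hφ

lemma lift_surjective {G : Type*} [Group G] {n : ℕ} {g : Fin n → G} (hg : IsGenerating g) :
    Function.Surjective (FreeGroup.lift g) := by
  rw [← MonoidHom.range_eq_top, FreeGroup.range_lift_eq_closure]
  exact hg

/-- Two-sided configuration sets are invariant under group isomorphism. -/
lemma twoSidedConfigSet_mulEquiv {H H' : Type*} [Group H] [Group H'] (σ : H' ≃* H) {n m : ℕ}
    (h : Fin n → H) (F : Fin m → Set H) :
    TwoSidedConfigSet (fun i => σ.symm (h i)) (fun i => σ ⁻¹' F i) = TwoSidedConfigSet h F := by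
  ext d
  constructor
  · rintro ⟨x, hx, hi⟩
    exact ⟨σ x, hx, fun i => by simpa using hi i⟩
  · rintro ⟨x, hx, hi⟩
    exact ⟨σ.symm x, by simpa using hx, fun i => by simpa using hi i⟩

/-- If a word moves the cell `F i₀` off itself for all pairs with configuration set `S` of groups in
one universe, then it does so for such pairs in every universe, because finitely generated groups
are countable. -/
lemma golden_transfer {n m p : ℕ} {S : Set (TwoSidedConfig n m)} {i₀ : Fin m} {J : Fin p → Fin n}
    {ρ : Fin p → Bool}
    (hS : ∀ (H : Type v) [Group H] (h : Fin n → H) (F : Fin m → Set H),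
      IsGenerating h → IsPartition F → S = TwoSidedConfigSet h F →
      word h J ρ • F i₀ ∩ F i₀ = ∅)
    {H : Type w} [Group H] (h : Fin n → H) (F : Fin m → Set H)
    (hh : IsGenerating h) (hF : IsPartition F) (hSF : S = TwoSidedConfigSet h F)
    {y : H} (hy : y ∈ F i₀) : word h J ρ * y ∉ F i₀ := by
  have : Countable H := (lift_surjective hh).countable
  let σ : Shrink.{v} H ≃* H := Shrink.mulEquiv
  intro hmem
  have key := hS (Shrink.{v} H) (fun i => σ.symm (h i)) (fun i => σ ⁻¹' F i)
    (isGenerating_map σ.symm.toMonoidHom σ.symm.surjective hh) (fun x => hF (σ x))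
    (by rw [twoSidedConfigSet_mulEquiv, hSF])
  have hw : word (fun i => σ.symm (h i)) J ρ = σ.symm (word h J ρ) :=
    (map_word σ.symm.toMonoidHom h J ρ).symm
  rw [hw] at key
  have h1 : σ.symm (word h J ρ * y) ∈ σ.symm (word h J ρ) • (σ ⁻¹' F i₀) ∩ (σ ⁻¹' F i₀) := by
    refine ⟨⟨σ.symm y, by simpa using hy, by simp⟩, by simpa using hmem⟩
  rw [key] at h1
  exact h1

/-! ### The isomorphism of quotients -/

/-- If G ≈ₜ H, N ⊴ G with G/N finitely presented and G has a golden
configuration pair w.r.t. N, then G/N ≅ H/𝔑 for some normal subgroup 𝔑 of H. -/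
theorem quotient_isomorphism_of_configEqT_of_goldenConfigPairWrt
    {G : Type u} {H : Type w} [Group G] [Group H]
    (hGfg : Group.FG G) (hHfg : Group.FG H) (heq : ConfigEqT G H)
    (N : Subgroup G) [N.Normal]
    (hfp : IsFinitelyPresentedGroup (G ⧸ N))
    (hgold : HasGoldenConfigPairWrt.{u, v} G N) :
    ∃ 𝔑 : Subgroup H, ∃ hn : 𝔑.Normal,
      letI := hn
      Nonempty ((G ⧸ N) ≃* (H ⧸ 𝔑)) := by
  obtain ⟨n, m, g, E, hg, hE, i₀, hi₀, p, J, ρ, hrep, hgolden⟩ := hgold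
  let q := QuotientGroup.mk' N
  have hq : Function.Surjective q := QuotientGroup.mk'_surjective N
  let gq : Fin n → G ⧸ N := fun i => q (g i)
  have hgq : IsGenerating gq := isGenerating_map q hq hg
  obtain ⟨S, hSfin, hS1, hSfac⟩ :=
    exists_finite_relators.{w} hfp (FreeGroup.lift gq) (lift_surjective hgq)
  let B : Set (G ⧸ N) := {1} ∪ Set.range (fun i => (gq i)⁻¹) ∪
    ⋃ s ∈ S, (fun t => FreeGroup.lift gq (FreeGroup.mk t)) '' {t | t ∈ s.toWord.tails}
  have hBfin : B.Finite := by
    refine ((Set.finite_singleton _).union (Set.finite_range _)).union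
      (hSfin.biUnion fun s _ => Set.Finite.image _ (List.finite_toSet _))
  have hB1 : (1 : G ⧸ N) ∈ B := Or.inl (Or.inl rfl)
  have hBi : ∀ i, (gq i)⁻¹ ∈ B := fun i => Or.inl (Or.inr ⟨i, rfl⟩)
  have hBs : ∀ s ∈ S, ∀ t, t <:+ s.toWord → FreeGroup.lift gq (FreeGroup.mk t) ∈ B :=
    fun s hs t ht => Or.inr (Set.mem_biUnion hs ⟨t, (List.mem_tails _ _).2 ht, rfl⟩)
  obtain ⟨m', e, c, hce, hB⟩ := exists_refinement (cellOf hE) hBfin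
  -- the pair of `H` with the configuration set of the refined pair
  have hmem : (⟨n, m', TwoSidedConfigSet g (fun i => {x | e (q x) = i})⟩ :
      Σ n m : ℕ, Set (TwoSidedConfig n m)) ∈ TwoSidedConfigSets H := by
    rw [← show TwoSidedConfigSets G = TwoSidedConfigSets H from heq]
    exact ⟨g, _, hg, isPartition_fibers _, rfl⟩
  obtain ⟨h, F, hh, hF, hconf⟩ := hmem
  dsimp only at h F hh hF hconf
  let κ : H → Fin m' := cellOf hF
  have hFκ : F = fun i => {x | κ x = i} := by
    funext i
    ext x
    exact mem_cell_iff hF x i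
  rw [hFκ] at hconf
  have hGH : ConfigLE g h (fun x => e (q x)) κ := configLE_of_subset hconf.ge
  have hHG : ConfigLE h g κ (fun x => e (q x)) := configLE_of_subset hconf.le
  have hc : ConfigLE gq h e κ := by
    intro x
    obtain ⟨z, hz, hi⟩ := hGH x
    exact ⟨q z, hz, fun i => by simpa [gq] using hi i⟩
  have hnormal := cell_normal hB hc hB1 hBi hh
  let M : Set H := {x | κ x = e 1}
  have hn : (leftStab M).Normal := leftStab_normal M hnormal
  obtain ⟨ψ, hψ⟩ := hSfac (H ⧸ leftStab M)
    ((QuotientGroup.mk' (leftStab M)).comp (FreeGroup.lift h)) (by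
      intro s hs
      rw [MonoidHom.comp_apply, QuotientGroup.mk'_apply, QuotientGroup.eq_one_iff]
      intro x
      have h1 := cell_word hB hc s.toWord (hBs s hs) x
      rwa [FreeGroup.mk_toWord, hS1 s hs] at h1)
  have hψg : ∀ i, ψ (gq i) = QuotientGroup.mk' (leftStab M) (h i) := by
    intro i
    simpa using hψ (FreeGroup.of i)
  refine ⟨leftStab M, hn, ⟨MulEquiv.ofBijective ψ ⟨?_, ?_⟩⟩⟩
  · rw [injective_iff_map_eq_one]
    intro a ha
    obtain ⟨x, rfl⟩ := hq a
    by_contra hne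
    have hx : x ∉ N := fun hx => hne ((QuotientGroup.eq_one_iff x).2 hx)
    rw [show q x = word gq (J x) (ρ x) from hrep x hx, map_word] at ha
    simp only [hψg] at ha
    rw [← map_word, QuotientGroup.mk'_apply, QuotientGroup.eq_one_iff] at ha
    have hce1 : ∀ z, c (e z) = i₀ ↔ z = 1 := by
      intro z
      rw [hce, ← mem_cell_iff hE, hi₀, Set.mem_singleton_iff]
    have hcoarse : TwoSidedConfigSet g (fun i => QuotientGroup.mk' N ⁻¹' E i)
        = TwoSidedConfigSet h (fun i => {y | c (κ y) = i}) := by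
      have h1 : (fun i => QuotientGroup.mk' N ⁻¹' E i) = fun i => {y | c (e (q y)) = i} := by
        funext i
        ext y
        rw [Set.mem_preimage, mem_cell_iff hE, Set.mem_ofPred_eq, hce]
      rw [h1]
      exact Set.Subset.antisymm (subset_of_configLE hHG c) (subset_of_configLE hGH c)
    obtain ⟨y, hy, -⟩ := hHG 1
    have hyM : y ∈ M := by
      exact hy.symm.trans (congrArg e (map_one q))
    have hMF : ∀ y ∈ M, c (κ y) = i₀ := by
      intro y hy
      rw [show κ y = e 1 from hy]
      exact (hce1 1).2 rfl
    exact golden_transfer (fun H' _ h' F' a1 a2 a3 => hgolden H' h' F' a1 a2 a3 x hx)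
      h (fun i => {y | c (κ y) = i}) hh (isPartition_fibers _) hcoarse (hMF y hyM)
      (hMF _ ((ha y).2 hyM))
  · intro b
    obtain ⟨k, rfl⟩ := QuotientGroup.mk'_surjective _ b
    obtain ⟨a, rfl⟩ := lift_surjective hh k
    exact ⟨_, hψ a⟩
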